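/- Let π_0 ∈ (0,1), π_1 = 1 − π_0, τ = π_0/π_1, and α ∈ (1/2, 1]. Then the function d ↦ (1 − α) + (2α − 1) · ( π_0 Q(ln(τ)/d + d/2) + π_1 Q(d/2 − ln(τ)/d) ) is strictly decreasing on (0,∞). (This is the biased-transmitter-cost example: when the transmitter's and receiver's objectives are aligned with probability α > 1/2, the transmitter's Stackelberg risk under the receiver's likelihood-ratio test strictly decreases in the normalized separation d, so the Stackelberg equilibrium is informative with maximal separation.) -/

import Mathlib

/-- The standard Gaussian tail function `Q(x) = ∫_x^∞ (1/√(2π)) e^{-t²/2} dt`. -/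
noncomputable def Q (x : ℝ) : ℝ :=
  ∫ t in Set.Ioi x, (1 / Real.sqrt (2 * Real.pi)) * Real.exp (-t ^ 2 / 2)

/-!
Write `φ` for the standard Gaussian density and `x = ln τ / d + d / 2`, `y = d / 2 - ln τ / d` for
the arguments of the two tail functions. Since `x ^ 2 - y ^ 2 = 2 ln τ`, we have `φ y = τ φ x`, so
differentiating `p Q(x) + q Q(y)` in `d` gives
`-φ x ((p + q τ) / 2 + (q τ - p) ln τ / d ^ 2)`. At the threshold `τ = p / q` that is optimal for
the weights `p` and `q`, the second term vanishes and what remains is `-p φ x < 0`.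
-/

open MeasureTheory ProbabilityTheory Set

theorem hasDerivAt_setIntegral_Ioi {E : Type*} [NormedAddCommGroup E] [NormedSpace ℝ E]
    [CompleteSpace E] {f : ℝ → E} {a x : ℝ} (hf : IntegrableOn f (Ioi a)) (hax : a < x)
    (hfx : ContinuousAt f x) : HasDerivAt (fun u ↦ ∫ t in Ioi u, f t) (-f x) x := by
  have integrableOn_Ioi {u : ℝ} (hu : a < u) : IntegrableOn f (Ioi u) :=
    hf.mono_set (Ioi_subset_Ioi hu.le)
  have intervalIntegrable : IntervalIntegrable f volume a x :=
    (intervalIntegrable_iff_integrableOn_Ioc_of_le hax.le).2 (hf.mono_set Ioc_subset_Ioi_self)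
  have hasDerivAt_interval : HasDerivAt (fun u ↦ ∫ t in a..u, f t) (f x) x :=
    intervalIntegral.integral_hasDerivAt_right intervalIntegrable
      ⟨Ioi a, Ioi_mem_nhds hax, hf.aestronglyMeasurable⟩ hfx
  refine (hasDerivAt_interval.const_sub (∫ t in Ioi a, f t)).congr_of_eventuallyEq ?_
  filter_upwards [Ioi_mem_nhds hax] with u hu
  rw [← intervalIntegral.integral_interval_add_Ioi hf (integrableOn_Ioi hu), add_sub_cancel_left]

theorem continuous_gaussianPDFReal (μ : ℝ) (v : NNReal) : Continuous (gaussianPDFReal μ v) := by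
  unfold gaussianPDFReal
  fun_prop

theorem gaussianPDFReal_zero_sub_eq_exp_mul_add (v : NNReal) (x y : ℝ) :
    gaussianPDFReal 0 v (x - y) = Real.exp (2 * x * y / v) * gaussianPDFReal 0 v (x + y) := by
  simp only [gaussianPDFReal, sub_zero]
  rw [mul_left_comm, ← Real.exp_add]
  ring_nf

theorem Q_eq_setIntegral_gaussianPDFReal (x : ℝ) : Q x = ∫ t in Ioi x, gaussianPDFReal 0 1 t := by
  simp [Q, gaussianPDFReal]

theorem hasDerivAt_Q (x : ℝ) : HasDerivAt Q (-gaussianPDFReal 0 1 x) x := by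
  rw [funext Q_eq_setIntegral_gaussianPDFReal]
  exact hasDerivAt_setIntegral_Ioi (integrable_gaussianPDFReal 0 1).integrableOn (sub_one_lt x)
    (continuous_gaussianPDFReal 0 1).continuousAt

/-- The risk of the likelihood-ratio test with threshold `τ` between two unit-variance Gaussians
whose means are `d` apart, when the errors under the two hypotheses are weighted by `p` and `q`.
The weights need not be normalized, nor related to `τ`: this allows the transmitter's priors and
costs to differ from those from which the receiver computes `τ`. -/
noncomputable def likelihoodRatioRisk (p q τ d : ℝ) : ℝ :=
  p * Q (Real.log τ / d + d / 2) + q * Q (d / 2 - Real.log τ / d)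

section LikelihoodRatioRisk

variable {p q τ d : ℝ}

theorem gaussianPDFReal_half_sub_log_div (hτ : 0 < τ) (hd : d ≠ 0) :
    gaussianPDFReal 0 1 (d / 2 - Real.log τ / d) =
      τ * gaussianPDFReal 0 1 (Real.log τ / d + d / 2) := by
  have exponent_eq : 2 * (d / 2) * (Real.log τ / d) / (1 : NNReal) = Real.log τ := by
    rw [NNReal.coe_one]
    field_simp
  rw [gaussianPDFReal_zero_sub_eq_exp_mul_add, exponent_eq, Real.exp_log hτ, add_comm]

theorem hasDerivAt_likelihoodRatioRisk (p q : ℝ) (hτ : 0 < τ) (hd : d ≠ 0) :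
    HasDerivAt (likelihoodRatioRisk p q τ)
      (-(gaussianPDFReal 0 1 (Real.log τ / d + d / 2) *
        ((p + q * τ) / 2 + (q * τ - p) * Real.log τ / d ^ 2))) d := by
  have hasDerivAt_log_div : HasDerivAt (fun u ↦ Real.log τ / u) (-Real.log τ / d ^ 2) d := by
    simpa using (hasDerivAt_const d (Real.log τ)).fun_div (hasDerivAt_id' d) hd
  have hasDerivAt_half : HasDerivAt (fun u : ℝ ↦ u / 2) (1 / 2) d :=
    (hasDerivAt_id' d).div_const 2
  have hasDerivAt_left := (hasDerivAt_Q _).comp d (hasDerivAt_log_div.fun_add hasDerivAt_half)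
  have hasDerivAt_right := (hasDerivAt_Q _).comp d (hasDerivAt_half.fun_sub hasDerivAt_log_div)
  refine ((hasDerivAt_left.const_mul p).add (hasDerivAt_right.const_mul q)).congr_deriv ?_
  rw [gaussianPDFReal_half_sub_log_div hτ hd]
  ring

theorem strictAntiOn_likelihoodRatioRisk (hτ : 0 < τ) (hpq : 0 < p + q * τ)
    (hlog : 0 ≤ (q * τ - p) * Real.log τ) :
    StrictAntiOn (likelihoodRatioRisk p q τ) (Ioi 0) := by
  have hasDerivAt_risk {d : ℝ} (hd : 0 < d) := hasDerivAt_likelihoodRatioRisk p q hτ hd.ne'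
  refine strictAntiOn_of_deriv_neg (convex_Ioi 0)
    (fun d hd ↦ (hasDerivAt_risk hd).continuousAt.continuousWithinAt) fun d hd ↦ ?_
  rw [interior_Ioi] at hd
  have density_pos := gaussianPDFReal_pos 0 1 (Real.log τ / d + d / 2) one_ne_zero
  rw [(hasDerivAt_risk hd).deriv, neg_lt_zero]
  positivity

end LikelihoodRatioRisk

theorem stmt_19_general {p q τ a b : ℝ} (hτ : 0 < τ) (hpq : 0 < p + q * τ)
    (hlog : 0 ≤ (q * τ - p) * Real.log τ) (hb : 0 < b) :
    StrictAntiOn (fun d ↦ a + b * likelihoodRatioRisk p q τ d) (Ioi 0) :=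
  ((strictMono_mul_left_of_pos hb).const_add a).comp_strictAntiOn
    (strictAntiOn_likelihoodRatioRisk hτ hpq hlog)

/-- Biased-transmitter-cost example: with priors `π₀ ∈ (0,1)`, `π₁ = 1 - π₀`,
`τ = π₀/π₁`, and alignment probability `α ∈ (1/2, 1]`, the transmitter's Stackelberg
risk `d ↦ (1-α) + (2α-1)(π₀ Q(ln τ/d + d/2) + π₁ Q(d/2 - ln τ/d))` under the
receiver's likelihood-ratio test is strictly decreasing on `(0, ∞)`. -/
theorem stmt_19 (π0 τ α : ℝ) (hπ : π0 ∈ Set.Ioo (0 : ℝ) 1)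
    (hτ : τ = π0 / (1 - π0)) (hα : α ∈ Set.Ioc (1 / 2 : ℝ) 1) :
    StrictAntiOn
      (fun d : ℝ =>
        (1 - α) + (2 * α - 1) *
          (π0 * Q (Real.log τ / d + d / 2) + (1 - π0) * Q (d / 2 - Real.log τ / d)))
      (Set.Ioi 0) := by
  have π1_pos : 0 < 1 - π0 := sub_pos.2 hπ.2
  have threshold_optimal : (1 - π0) * τ = π0 := by rw [hτ, mul_div_cancel₀ _ π1_pos.ne']
  exact stmt_19_general (hτ ▸ div_pos hπ.1 π1_pos) (by linarith [hπ.1])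
    (by rw [threshold_optimal, sub_self, zero_mul]) (by linarith [hα.1])
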